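/- Let η be a nonnegative atomless integrable random variable on a probability space (Ω, 𝓕, P), and let μ be a Borel probability measure on [0, ∞) with finite first moment such that c := ∫₀¹ q_η(1−p) · q_μ(p) dp < ∞. If X is a nonnegative random variable with law μ and E[η·X] = c, then X = q_μ(1 − F_η(η)) almost surely; that is, the cost-efficient payoff is unique. -/

import Mathlib

open MeasureTheory Set

/-- The quantile function of a Borel measure `μ` on `ℝ`:
`q_μ(p) = inf {x | p ≤ μ((-∞, x])}`. -/
noncomputable def quantile (μ : Measure ℝ) (p : ℝ) : ℝ :=
  sInf {x : ℝ | p ≤ (μ (Iic x)).toReal}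

lemma cdfAux_eq (μ : Measure ℝ) [IsProbabilityMeasure μ] (x : ℝ) :
    (μ (Iic x)).toReal = ProbabilityTheory.cdf μ x := by
  rw [ProbabilityTheory.cdf_eq_real]; rfl

lemma quantile_le_iff (μ : Measure ℝ) [IsProbabilityMeasure μ] {p : ℝ} (h0 : 0 < p) (h1 : p < 1)
    (x : ℝ) : quantile μ p ≤ x ↔ p ≤ (μ (Iic x)).toReal := by
  unfold quantile
  simp only [cdfAux_eq]
  set G := ProbabilityTheory.cdf μ with hG
  have hbdd : BddBelow {x : ℝ | p ≤ G x} := by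
    have := (ProbabilityTheory.tendsto_cdf_atBot μ).eventually (gt_mem_nhds h0)
    obtain ⟨b, hb⟩ := this.exists
    refine ⟨b, fun y hy => ?_⟩
    by_contra hlt
    have := G.mono (not_le.mp hlt).le
    simp only [mem_setOf_eq] at hy
    linarith
  have hne : ({x : ℝ | p ≤ G x}).Nonempty := by
    have := (ProbabilityTheory.tendsto_cdf_atTop μ).eventually (lt_mem_nhds h1)
    obtain ⟨b, hb⟩ := this.exists
    exact ⟨b, hb.le⟩
  constructor
  · intro h
    have hr := (G.right_continuous x).mono (Ioi_subset_Ici_self)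
    refine ge_of_tendsto hr ?_
    filter_upwards [self_mem_nhdsWithin] with y hy
    have : sInf {x : ℝ | p ≤ G x} < y := lt_of_le_of_lt h hy
    obtain ⟨z, hz, hzy⟩ := exists_lt_of_csInf_lt hne this
    exact le_trans hz (G.mono hzy.le)
  · intro h
    exact csInf_le hbdd h

lemma quantile_nonneg (μ : Measure ℝ) [IsProbabilityMeasure μ] (hμ : μ (Iio 0) = 0)
    {p : ℝ} (h0 : 0 < p) (h1 : p < 1) : 0 ≤ quantile μ p := by
  by_contra h
  push Not at h
  have h2 := (quantile_le_iff μ h0 h1 _).1 le_rfl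
  have : μ (Iic (quantile μ p)) = 0 :=
    measure_mono_null (fun x hx => lt_of_le_of_lt (mem_Iic.1 hx) h) hμ
  rw [this] at h2
  simp at h2
  linarith

lemma measure_Iio_quantile (ν : Measure ℝ) [IsProbabilityMeasure ν]
    (hc : Continuous fun x => (ν (Iic x)).toReal) {v : ℝ} (h0 : 0 < v) (h1 : v < 1) :
    ν (Iio (quantile ν v)) = ENNReal.ofReal v := by
  set a := quantile ν v with ha
  have hG : (fun x => (ν (Iic x)).toReal) = ProbabilityTheory.cdf ν := funext (cdfAux_eq ν)
  have h2 := (quantile_le_iff ν h0 h1 a).1 le_rfl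
  have h3 : (ν (Iic a)).toReal ≤ v := by
    have : Filter.Tendsto (fun x => (ν (Iic x)).toReal) (nhdsWithin a (Iio a))
      (nhds (ν (Iic a)).toReal) := (hc.tendsto a).mono_left nhdsWithin_le_nhds
    refine le_of_tendsto this ?_
    filter_upwards [self_mem_nhdsWithin] with y hy
    by_contra hlt
    have := (quantile_le_iff ν h0 h1 y).2 (not_le.mp hlt).le
    exact absurd hy (not_lt.mpr this)
  have h4 : (ProbabilityTheory.cdf ν) a = v := by rw [← cdfAux_eq]; exact le_antisymm h3 h2
  conv_lhs => rw [← ProbabilityTheory.measure_cdf ν]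
  rw [StieltjesFunction.measure_Iio _ (ProbabilityTheory.tendsto_cdf_atBot ν), sub_zero]
  rw [hG] at hc
  rw [(hc.continuousAt (x := a)).continuousWithinAt.leftLim_eq, h4]

lemma uniform_law {Ω : Type*} [MeasurableSpace Ω] (P : Measure Ω) [IsProbabilityMeasure P]
    (η : Ω → ℝ) (hη : Measurable η)
    (hc : Continuous fun x => ((P.map η) (Iic x)).toReal) :
    P.map (fun ω => 1 - ((P.map η) (Iic (η ω))).toReal) = volume.restrict (Ioo (0:ℝ) 1) := by
  have hprob : IsProbabilityMeasure (P.map η) := Measure.isProbabilityMeasure_map hη.aemeasurable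
  set U : Ω → ℝ := fun ω => 1 - ((P.map η) (Iic (η ω))).toReal with hU
  have hUm : Measurable U := measurable_const.sub (hc.measurable.comp hη)
  have hUprob : IsProbabilityMeasure (P.map U) := Measure.isProbabilityMeasure_map hUm.aemeasurable
  have key : ∀ p : ℝ, 0 < p → p < 1 → P.map U (Iic p) = ENNReal.ofReal p := by
    intro p h0 h1
    rw [Measure.map_apply hUm measurableSet_Iic]
    have : U ⁻¹' (Iic p) = η ⁻¹' (Iio (quantile (P.map η) (1 - p)))ᶜ := by
      ext ω
      have := quantile_le_iff (P.map η) (p := 1 - p) (by linarith) (by linarith) (η ω)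
      simp only [mem_preimage, mem_Iic, compl_Iio, mem_Ici, hU, this]
      constructor <;> intro h <;> linarith
    rw [this, ← Measure.map_apply hη measurableSet_Iio.compl,
      prob_compl_eq_one_sub measurableSet_Iio, measure_Iio_quantile _ hc (by linarith) (by linarith),
      ← ENNReal.ofReal_one, ← ENNReal.ofReal_sub _ (by linarith)]
    congr 1; ring
  refine Measure.ext_of_Iic _ _ fun p => ?_
  rw [Measure.restrict_apply measurableSet_Iic]
  rcases le_or_gt p 0 with h0 | h0
  · have e : Iic p ∩ Ioo (0:ℝ) 1 = ∅ := by
      ext x; simp only [mem_inter_iff, mem_Iic, mem_Ioo, mem_empty_iff_false, iff_false]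
      rintro ⟨h, h', -⟩; linarith
    rw [e, measure_empty]
    have ht : Filter.Tendsto (fun x : ℝ => ENNReal.ofReal x) (nhdsWithin 0 (Ioi 0)) (nhds 0) := by
      have := (ENNReal.continuous_ofReal.tendsto 0).mono_left
        (nhdsWithin_le_nhds (s := Ioi (0:ℝ)))
      simpa using this
    refine le_antisymm (ge_of_tendsto ht ?_) bot_le
    filter_upwards [Ioo_mem_nhdsGT (zero_lt_one (α := ℝ))] with x hx
    rw [← key x hx.1 hx.2]
    exact measure_mono (Iic_subset_Iic.2 (h0.trans hx.1.le))
  rcases lt_or_ge p 1 with h1 | h1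
  · have e : Iic p ∩ Ioo (0:ℝ) 1 = Ioc 0 p := by
      ext x; simp only [mem_inter_iff, mem_Iic, mem_Ioo, mem_Ioc]
      constructor
      · rintro ⟨h, h', -⟩; exact ⟨h', h⟩
      · rintro ⟨h, h'⟩; exact ⟨h', h, by linarith⟩
    rw [e, key p h0 h1]; simp
  · have e : Iic p ∩ Ioo (0:ℝ) 1 = Ioo 0 1 := by
      apply inter_eq_right.2
      intro x hx; exact hx.2.le.trans h1
    rw [e, Measure.map_apply hUm measurableSet_Iic]
    have : U ⁻¹' (Iic p) = univ := by
      ext ω; simp only [mem_preimage, mem_Iic, mem_univ, iff_true, hU]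
      have : 0 ≤ ((P.map η) (Iic (η ω))).toReal := ENNReal.toReal_nonneg
      linarith
    rw [this]; simp

lemma exchange {Ω : Type*} [MeasurableSpace Ω] (P : Measure Ω) [IsProbabilityMeasure P]
    (η : Ω → ℝ) (hη : Measurable η) (hη0 : ∀ ω, 0 ≤ η ω) (hηint : Integrable η P)
    (A : Set Ω) (hA : MeasurableSet A) (a : ℝ) (hP : P A = P {ω | η ω < a}) :
    (∫⁻ ω in {ω | η ω < a}, ENNReal.ofReal (η ω) ∂P ≤ ∫⁻ ω in A, ENNReal.ofReal (η ω) ∂P) ∧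
    (∫⁻ ω in {ω | η ω < a}, ENNReal.ofReal (η ω) ∂P = ∫⁻ ω in A, ENNReal.ofReal (η ω) ∂P →
      A =ᵐ[P] {ω | η ω < a}) := by
  set B := {ω | η ω < a} with hBdef
  have hB : MeasurableSet B := measurableSet_lt hη measurable_const
  have hint : Integrable (fun ω => η ω - a) P := hηint.sub (integrable_const a)
  set h : Ω → ℝ := fun ω => A.indicator (fun ω => η ω - a) ω - B.indicator (fun ω => η ω - a) ω
    with hh
  have hhint : Integrable h P := (hint.indicator hA).sub (hint.indicator hB)
  have hnn : 0 ≤ h := by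
    intro ω
    simp only [hh, Pi.zero_apply]
    by_cases h1 : ω ∈ A <;> by_cases h2 : ω ∈ B <;> simp [h1, h2]
    · simpa [hBdef] using h2
    · exact le_of_lt h2
  have hval : ∫ ω, h ω ∂P = ∫ ω in A, η ω ∂P - ∫ ω in B, η ω ∂P := by
    rw [hh, integral_sub (hint.indicator hA) (hint.indicator hB), integral_indicator hA,
      integral_indicator hB, integral_sub hηint.integrableOn (integrable_const a).integrableOn,
      integral_sub hηint.integrableOn (integrable_const a).integrableOn]
    simp [Measure.real, hP]
  have hl : ∀ S : Set Ω, ∫⁻ ω in S, ENNReal.ofReal (η ω) ∂P = ENNReal.ofReal (∫ ω in S, η ω ∂P) :=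
    fun S => (ofReal_integral_eq_lintegral_ofReal hηint.integrableOn
      (Filter.Eventually.of_forall hη0)).symm
  have hnonneg : ∀ S : Set Ω, 0 ≤ ∫ ω in S, η ω ∂P := fun S => integral_nonneg hη0
  rw [hl, hl]
  constructor
  · apply ENNReal.ofReal_le_ofReal
    have := integral_nonneg (μ := P) hnn
    linarith
  · intro he
    rw [ENNReal.ofReal_eq_ofReal_iff (hnonneg _) (hnonneg _)] at he
    have hz : ∫ ω, h ω ∂P = 0 := by rw [hval]; linarith
    rw [integral_eq_zero_iff_of_nonneg hnn hhint] at hz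
    have hBA : B ≤ᵐ[P] A := by
      filter_upwards [hz] with ω hω hωB
      by_contra hωA
      have hωA' : ω ∉ A := hωA
      have hωB' : ω ∈ B := hωB
      have h3 : η ω < a := hωB
      simp [hh, hωA', hωB'] at hω
      linarith
    exact (ae_eq_of_ae_subset_of_measure_ge hBA hP.le hB.nullMeasurableSet
      (measure_ne_top _ _)).symm

lemma vol_layer (x : ℝ) : ∫⁻ t in Ioi (0:ℝ), (Iio x).indicator (1 : ℝ → ENNReal) t
    = ENNReal.ofReal x := by
  rw [lintegral_indicator_one measurableSet_Iio, Measure.restrict_apply measurableSet_Iio]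
  rw [inter_comm, Ioi_inter_Iio]; simp

/-- Uniqueness of the cost-efficient payoff: if `η ≥ 0` is atomless and integrable, `μ` is a
Borel probability measure on `[0, ∞)` with finite first moment, the Hardy–Littlewood bound
`c := ∫₀¹ q_η(1-p) q_μ(p) dp` is finite, and a nonnegative `X` with law `μ` satisfies
`E[η X] = c`, then `X = q_μ(1 - F_η(η))` almost surely. -/
theorem cost_efficient_unique {Ω : Type*} [MeasurableSpace Ω]
    (P : Measure Ω) [IsProbabilityMeasure P]
    (η : Ω → ℝ) (hη : Measurable η) (hη0 : ∀ ω, 0 ≤ η ω)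
    (hηint : Integrable η P)
    (hatomless : Continuous fun x => ((P.map η) (Iic x)).toReal)
    (μ : Measure ℝ) [IsProbabilityMeasure μ] (hμ : μ (Iio 0) = 0)
    (hmoment : ∫⁻ x, ENNReal.ofReal x ∂μ < ⊤)
    (hfin : ∫⁻ p in Ioo (0:ℝ) 1,
        ENNReal.ofReal (quantile (P.map η) (1 - p) * quantile μ p) < ⊤)
    (X : Ω → ℝ) (hX : Measurable X) (hX0 : ∀ ω, 0 ≤ X ω) (hlaw : P.map X = μ)
    (hcost : ∫⁻ ω, ENNReal.ofReal (η ω * X ω) ∂P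
        = ∫⁻ p in Ioo (0:ℝ) 1,
            ENNReal.ofReal (quantile (P.map η) (1 - p) * quantile μ p)) :
    ∀ᵐ ω ∂P, X ω = quantile μ (1 - ((P.map η) (Iic (η ω))).toReal) := by
  have hprob : IsProbabilityMeasure (P.map η) := Measure.isProbabilityMeasure_map hη.aemeasurable
  have hUlaw := uniform_law P η hη hatomless
  set U : Ω → ℝ := fun ω => 1 - ((P.map η) (Iic (η ω))).toReal with hU
  have hUm : Measurable U := measurable_const.sub (hatomless.measurable.comp hη)
  set G : ℝ → ℝ := fun t => (μ (Iic t)).toReal with hG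
  have hGm : Measurable G := by
    have : G = ProbabilityTheory.cdf μ := funext (cdfAux_eq μ)
    rw [this]; exact (ProbabilityTheory.cdf μ).mono.measurable
  have hG0 : ∀ t, 0 ≤ G t := fun t => ENNReal.toReal_nonneg
  have hG1 : ∀ t, G t ≤ 1 := fun t => measureReal_le_one
  have hUI : ∀ᵐ ω ∂P, U ω ∈ Ioo (0:ℝ) 1 := by
    have : ∀ᵐ p ∂(P.map U), p ∈ Ioo (0:ℝ) 1 := by
      rw [hUlaw]; exact ae_restrict_mem measurableSet_Ioo
    exact ae_of_ae_map hUm.aemeasurable this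
  set SA : Set (Ω × ℝ) := {z | z.2 < X z.1} with hSA
  set SB : Set (Ω × ℝ) := {z | G z.2 < U z.1} with hSB
  have hSAm : MeasurableSet SA := measurableSet_lt measurable_snd (hX.comp measurable_fst)
  have hSBm : MeasurableSet SB :=
    measurableSet_lt (hGm.comp measurable_snd) (hUm.comp measurable_fst)
  have hqlt : ∀ ω, U ω ∈ Ioo (0:ℝ) 1 → ∀ t, (G t < U ω ↔ t < quantile μ (U ω)) := by
    intro ω hω t
    rw [← not_le, ← not_le, quantile_le_iff μ hω.1 hω.2]
  -- layer cake
  have hmeas : ∀ S : Set (Ω × ℝ), MeasurableSet S →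
      Measurable (fun z : Ω × ℝ => ENNReal.ofReal (η z.1) * S.indicator 1 z) := fun S hS =>
    (hη.comp measurable_fst).ennreal_ofReal.mul (measurable_one.indicator hS)
  have hswap : ∀ S : Set (Ω × ℝ), MeasurableSet S →
      ∫⁻ ω, ENNReal.ofReal (η ω) * (∫⁻ t in Ioi (0:ℝ), S.indicator 1 (ω, t)) ∂P
      = ∫⁻ t in Ioi (0:ℝ), ∫⁻ ω in {ω | (ω, t) ∈ S}, ENNReal.ofReal (η ω) ∂P := by
    intro S hS
    have h1 : ∀ ω, ENNReal.ofReal (η ω) * (∫⁻ t in Ioi (0:ℝ), S.indicator 1 (ω, t))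
        = ∫⁻ t in Ioi (0:ℝ), ENNReal.ofReal (η ω) * S.indicator 1 (ω, t) := by
      intro ω
      rw [lintegral_const_mul']
      exact ENNReal.ofReal_ne_top
    simp_rw [h1]
    rw [lintegral_lintegral_swap (f := fun ω t => ENNReal.ofReal (η ω) * S.indicator 1 (ω, t))
      (hmeas S hS).aemeasurable]
    refine lintegral_congr fun t => ?_
    have : MeasurableSet {ω | (ω, t) ∈ S} := measurable_prodMk_right hS
    rw [← lintegral_indicator this]
    refine lintegral_congr fun ω => ?_
    by_cases h : (ω, t) ∈ S <;> simp [h]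
  have hcA : ∀ ω, ∫⁻ t in Ioi (0:ℝ), SA.indicator 1 (ω, t) = ENNReal.ofReal (X ω) := by
    intro ω
    rw [← vol_layer (X ω)]
    rfl
  have hcB : ∀ ω, U ω ∈ Ioo (0:ℝ) 1 → ∫⁻ t in Ioi (0:ℝ), SB.indicator 1 (ω, t)
      = ENNReal.ofReal (quantile μ (U ω)) := by
    intro ω hω
    rw [← vol_layer]
    refine lintegral_congr fun t => ?_
    have := hqlt ω hω t
    by_cases h : G t < U ω
    · rw [indicator_of_mem (show (ω, t) ∈ SB from h), indicator_of_mem (show t ∈ Iio _ from this.1 h)]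
      rfl
    · rw [indicator_of_notMem (show (ω, t) ∉ SB from h),
        indicator_of_notMem (show t ∉ Iio _ from fun h' => h (this.2 h'))]
  have hA := hswap SA hSAm
  have hB := hswap SB hSBm
  simp_rw [hcA] at hA
  have hAc : ∫⁻ ω, ENNReal.ofReal (η ω) * ENNReal.ofReal (X ω) ∂P
      = ∫⁻ ω, ENNReal.ofReal (η ω * X ω) ∂P :=
    lintegral_congr fun ω => (ENNReal.ofReal_mul (hη0 ω)).symm
  have hle1 : ∫⁻ ω, ENNReal.ofReal (η ω * X ω) ∂P ≤
      ∫⁻ ω, ENNReal.ofReal (η ω) * (∫⁻ t in Ioi (0:ℝ), SB.indicator 1 (ω, t)) ∂P := by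
    rw [hcost, ← hUlaw]
    refine (lintegral_map_le _ _).trans (lintegral_mono_ae ?_)
    filter_upwards [hUI] with ω hω
    rw [hcB ω hω, ← ENNReal.ofReal_mul (hη0 ω)]
    apply ENNReal.ofReal_le_ofReal
    refine mul_le_mul_of_nonneg_right ?_ (quantile_nonneg μ hμ hω.1 hω.2)
    rw [quantile_le_iff _ (by linarith [hω.2]) (by linarith [hω.1])]
    simp [hU]
  have hPA : ∀ t, P {ω | (ω, t) ∈ SA} = ENNReal.ofReal (1 - G t) := by
    intro t
    have : {ω | (ω, t) ∈ SA} = X ⁻¹' (Iic t)ᶜ := by ext ω; simp [hSA]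
    rw [this, ← Measure.map_apply hX measurableSet_Iic.compl, hlaw,
      prob_compl_eq_one_sub measurableSet_Iic, ENNReal.ofReal_sub _ (hG0 t), ENNReal.ofReal_one,
      ENNReal.ofReal_toReal (measure_ne_top _ _)]
  have hPB : ∀ t, P {ω | (ω, t) ∈ SB} = ENNReal.ofReal (1 - G t) := by
    intro t
    have : {ω | (ω, t) ∈ SB} = U ⁻¹' (Ioi (G t)) := by ext ω; simp [hSB]
    rw [this, ← Measure.map_apply hUm measurableSet_Ioi, hUlaw,
      Measure.restrict_apply measurableSet_Ioi]
    have : Ioi (G t) ∩ Ioo (0:ℝ) 1 = Ioo (G t) 1 := by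
      ext x; simp only [mem_inter_iff, mem_Ioi, mem_Ioo]
      constructor
      · rintro ⟨h, -, h'⟩; exact ⟨h, h'⟩
      · rintro ⟨h, h'⟩; exact ⟨h, (hG0 t).trans_lt h, h'⟩
    rw [this, Real.volume_Ioo]
  have hlayer : ∀ t, (∫⁻ ω in {ω | (ω, t) ∈ SB}, ENNReal.ofReal (η ω) ∂P
        ≤ ∫⁻ ω in {ω | (ω, t) ∈ SA}, ENNReal.ofReal (η ω) ∂P) ∧
      (∫⁻ ω in {ω | (ω, t) ∈ SB}, ENNReal.ofReal (η ω) ∂P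
        = ∫⁻ ω in {ω | (ω, t) ∈ SA}, ENNReal.ofReal (η ω) ∂P →
        ({ω | (ω, t) ∈ SA} : Set Ω) =ᵐ[P] ({ω | (ω, t) ∈ SB} : Set Ω)) := by
    intro t
    have hmA : MeasurableSet {ω | (ω, t) ∈ SA} := measurable_prodMk_right hSAm
    have hmB : MeasurableSet {ω | (ω, t) ∈ SB} := measurable_prodMk_right hSBm
    have triv : ({ω | (ω, t) ∈ SA} : Set Ω) =ᵐ[P] ({ω | (ω, t) ∈ SB} : Set Ω) →
      (∫⁻ ω in {ω | (ω, t) ∈ SB}, ENNReal.ofReal (η ω) ∂P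
        ≤ ∫⁻ ω in {ω | (ω, t) ∈ SA}, ENNReal.ofReal (η ω) ∂P) ∧
      (∫⁻ ω in {ω | (ω, t) ∈ SB}, ENNReal.ofReal (η ω) ∂P
        = ∫⁻ ω in {ω | (ω, t) ∈ SA}, ENNReal.ofReal (η ω) ∂P →
        ({ω | (ω, t) ∈ SA} : Set Ω) =ᵐ[P] ({ω | (ω, t) ∈ SB} : Set Ω)) := fun h =>
      ⟨(setLIntegral_congr h).ge, fun _ => h⟩
    rcases (hG0 t).eq_or_lt with h0 | h0
    · apply triv
      have e1 := hPA t
      have e2 := hPB t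
      rw [← h0, sub_zero, ENNReal.ofReal_one] at e1 e2
      exact (Filter.eventuallyEq_univ.2 ((mem_ae_iff_prob_eq_one hmA).2 e1)).trans
        (Filter.eventuallyEq_univ.2 ((mem_ae_iff_prob_eq_one hmB).2 e2)).symm
    rcases (hG1 t).eq_or_lt with h1 | h1
    · apply triv
      have e1 := hPA t
      have e2 := hPB t
      rw [h1, sub_self, ENNReal.ofReal_zero] at e1 e2
      exact (ae_eq_empty.2 e1).trans (ae_eq_empty.2 e2).symm
    have hBe : {ω | (ω, t) ∈ SB} = {ω | η ω < quantile (P.map η) (1 - G t)} := by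
      ext ω
      have := quantile_le_iff (P.map η) (p := 1 - G t) (by linarith) (by linarith) (η ω)
      simp only [hSB, mem_setOf_eq]
      rw [← not_le, ← not_le, this, not_iff_not]
      simp only [hU]
      constructor <;> intro h <;> linarith
    have hPe := (hPA t).trans (hPB t).symm
    rw [hBe] at hPe ⊢
    exact exchange P η hη hη0 hηint _ hmA _ hPe
  have hAfin : ∫⁻ t in Ioi (0:ℝ), ∫⁻ ω in {ω | (ω, t) ∈ SA}, ENNReal.ofReal (η ω) ∂P < ⊤ := by
    rw [← hA, hAc, hcost]; exact hfin
  have hBA : ∫⁻ t in Ioi (0:ℝ), ∫⁻ ω in {ω | (ω, t) ∈ SB}, ENNReal.ofReal (η ω) ∂P ≤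
      ∫⁻ t in Ioi (0:ℝ), ∫⁻ ω in {ω | (ω, t) ∈ SA}, ENNReal.ofReal (η ω) ∂P :=
    lintegral_mono fun t => (hlayer t).1
  have hAm : Measurable fun t => ∫⁻ ω in {ω | (ω, t) ∈ SA}, ENNReal.ofReal (η ω) ∂P := by
    have := (hmeas SA hSAm).lintegral_prod_left' (μ := P)
    convert this using 2 with t
    have : MeasurableSet {ω | (ω, t) ∈ SA} := measurable_prodMk_right hSAm
    rw [← lintegral_indicator this]
    refine lintegral_congr fun ω => ?_
    by_cases h : (ω, t) ∈ SA <;> simp [h]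
  have hae := ae_eq_of_ae_le_of_lintegral_le (μ := volume.restrict (Ioi (0:ℝ)))
    (Filter.Eventually.of_forall fun t => (hlayer t).1) (hBA.trans_lt hAfin).ne hAm.aemeasurable
    (by rw [← hA, hAc, ← hB]; exact hle1)
  have hae2 : ∀ᵐ t ∂(volume.restrict (Ioi (0:ℝ))), ∀ᵐ ω ∂P, ((ω, t) ∈ SA ↔ (ω, t) ∈ SB) := by
    filter_upwards [hae] with t ht
    filter_upwards [(hlayer t).2 ht] with ω hω
    exact iff_of_eq hω
  have hae3 := (Measure.ae_ae_comm (μ := P) (ν := volume.restrict (Ioi (0:ℝ)))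
    (p := fun ω t => ((ω, t) ∈ SA ↔ (ω, t) ∈ SB)) (by
      exact MeasurableSet.iff hSAm hSBm)).2 hae2
  filter_upwards [hae3, hUI] with ω hω hωU
  have : ENNReal.ofReal (X ω) = ENNReal.ofReal (quantile μ (U ω)) := by
    rw [← hcA ω, ← hcB ω hωU]
    refine lintegral_congr_ae ?_
    filter_upwards [hω] with t ht
    by_cases h : (ω, t) ∈ SA
    · rw [indicator_of_mem h, indicator_of_mem (ht.1 h)]
    · rw [indicator_of_notMem h, indicator_of_notMem (fun h' => h (ht.2 h'))]
  exact (ENNReal.ofReal_eq_ofReal_iff (hX0 ω) (quantile_nonneg μ hμ hωU.1 hωU.2)).1 this
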